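/- arXiv:patt-sol/9311003 — 2 statements merged into one kernel-verified Lean document; each statement's English description precedes it below -/
import Mathlib

section
/- For every Schwartz function φ : ℝ → ℂ, the limit as τ → 0+ of ∫_{ℝ} (1/p) e^{iτ/p} φ(p) dp equals p.v.∫_{ℝ} φ(p)/p dp + iπ φ(0), and the limit as τ → 0− equals p.v.∫_{ℝ} φ(p)/p dp − iπ φ(0). In other words, (1/p) e^{iτ/p} converges in the space of tempered distributions to 1/(p ∓ i0) as τ → ±0. -/
open MeasureTheory Filter Topology

/- Subtracting `φ 0 / p` on `[-1, 1]` leaves an integrable function, whose integral against the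
bounded factor `exp (iτ/p)` is continuous in `τ` by dominated convergence. In the subtracted
singular part only the odd part of `exp (iτ/p)` survives the symmetric cutoff, and the substitution
`u = τ / p` turns `∫ p in ε..1, 2i sin (τ/p) / p` into `2i (Si (τ/ε) - Si τ)`. As `ε → 0⁺` the
Dirichlet integral `Si (±∞) = ±π/2` gives `2i (sign τ · π/2 - Si τ)`: the jump `±iπ` at `τ = 0`. -/

section SineIntegral

/-- The sine integral `Si x = ∫₀ˣ (sin u / u) du`, whose limit at infinity is the Dirichlet
integral. The integrand is `Real.sinc`, so it is continuous at `0`. -/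
noncomputable def sineIntegral (x : ℝ) : ℝ := ∫ u in (0 : ℝ)..x, Real.sinc u

lemma hasDerivAt_sineIntegral (x : ℝ) : HasDerivAt sineIntegral (Real.sinc x) x :=
  Real.continuous_sinc.integral_hasStrictDerivAt 0 x |>.hasDerivAt

lemma continuous_sineIntegral : Continuous sineIntegral :=
  continuous_iff_continuousAt.2 fun x => (hasDerivAt_sineIntegral x).continuousAt

@[simp]
lemma sineIntegral_zero : sineIntegral 0 = 0 := intervalIntegral.integral_same

lemma sineIntegral_neg (x : ℝ) : sineIntegral (-x) = -sineIntegral x := by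
  simpa [sineIntegral, Real.sinc_neg, intervalIntegral.integral_symm (-x) 0] using
    (intervalIntegral.integral_comp_neg (a := 0) (b := x) Real.sinc).symm

lemma integrableOn_exp_neg_mul_Ioi {x : ℝ} (hx : 0 < x) :
    IntegrableOn (fun t : ℝ => Real.exp (-(x * t))) (Set.Ioi 0) := by
  simpa using integrableOn_exp_mul_Ioi (neg_lt_zero.2 hx) 0

lemma integral_exp_neg_mul_Ioi {x : ℝ} (hx : 0 < x) :
    ∫ t in Set.Ioi (0 : ℝ), Real.exp (-(x * t)) = x⁻¹ := by
  simpa using integral_exp_mul_Ioi (neg_lt_zero.2 hx) 0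

lemma integral_sin_mul_exp_neg_mul (R t : ℝ) :
    ∫ x in (0 : ℝ)..R, Real.sin x * Real.exp (-(x * t)) =
      (1 + t ^ 2)⁻¹ - Real.exp (-(R * t)) * (Real.cos R + t * Real.sin R) * (1 + t ^ 2)⁻¹ := by
  have hderiv (x : ℝ) : HasDerivAt
      (fun x => -(Real.exp (-(x * t)) * (Real.cos x + t * Real.sin x) * (1 + t ^ 2)⁻¹))
      (Real.sin x * Real.exp (-(x * t))) x := by
    have hexp : HasDerivAt (fun x => Real.exp (-(x * t))) (Real.exp (-(x * t)) * -(1 * t)) x :=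
      ((hasDerivAt_id x).mul_const t).neg.exp
    have htrig : HasDerivAt (fun x => Real.cos x + t * Real.sin x) _ x :=
      (Real.hasDerivAt_cos x).add ((Real.hasDerivAt_sin x).const_mul t)
    refine ((hexp.mul htrig).mul_const (1 + t ^ 2)⁻¹).neg.congr_deriv ?_
    field_simp
    ring
  rw [intervalIntegral.integral_eq_sub_of_hasDerivAt (fun x _ => hderiv x)
    (Continuous.intervalIntegrable (by fun_prop) _ _)]
  simp only [zero_mul, neg_zero, Real.exp_zero, Real.cos_zero, Real.sin_zero, mul_zero, add_zero]
  ring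

lemma integral_sin_mul_exp_neg_mul_Ioi {x : ℝ} (hx : 0 < x) :
    ∫ t in Set.Ioi (0 : ℝ), Real.sin x * Real.exp (-(x * t)) = Real.sinc x := by
  rw [integral_const_mul, integral_exp_neg_mul_Ioi hx, Real.sinc_of_ne_zero hx.ne', div_eq_mul_inv]

lemma integrable_sin_mul_exp_neg_mul (R : ℝ) :
    Integrable (Function.uncurry fun x t : ℝ => Real.sin x * Real.exp (-(x * t)))
      ((volume.restrict (Set.Ioc 0 R)).prod (volume.restrict (Set.Ioi 0))) := by
  refine (integrable_prod_iff (Continuous.aestronglyMeasurable (by fun_prop))).2 ⟨?_, ?_⟩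
  · filter_upwards [ae_restrict_mem measurableSet_Ioc] with x hx
    exact (integrableOn_exp_neg_mul_Ioi hx.1).const_mul (Real.sin x)
  · have hsinc : IntegrableOn (fun x => |Real.sinc x|) (Set.Ioc 0 R) :=
      Real.continuous_sinc.abs.integrableOn_Ioc
    refine hsinc.congr_fun (fun x hx => ?_) measurableSet_Ioc
    simp only [Function.uncurry, norm_mul, Real.norm_eq_abs, Real.abs_exp]
    rw [integral_const_mul, integral_exp_neg_mul_Ioi hx.1, Real.sinc_of_ne_zero hx.1.ne', abs_div,
      abs_of_pos hx.1, div_eq_mul_inv]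

-- Write `1 / x` as the Laplace integral `∫ t in Ioi 0, exp (-x t)` and exchange the integrals.
lemma sineIntegral_eq_integral_Ioi {R : ℝ} (hR : 0 ≤ R) :
    sineIntegral R = ∫ t in Set.Ioi (0 : ℝ),
      ((1 + t ^ 2)⁻¹ - Real.exp (-(R * t)) * (Real.cos R + t * Real.sin R) * (1 + t ^ 2)⁻¹) :=
  calc
    sineIntegral R = ∫ x in Set.Ioc 0 R, Real.sinc x := intervalIntegral.integral_of_le hR
    _ = ∫ x in Set.Ioc 0 R, ∫ t in Set.Ioi (0 : ℝ), Real.sin x * Real.exp (-(x * t)) :=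
      setIntegral_congr_fun measurableSet_Ioc fun _ hx =>
        (integral_sin_mul_exp_neg_mul_Ioi hx.1).symm
    _ = ∫ t in Set.Ioi (0 : ℝ), ∫ x in Set.Ioc 0 R, Real.sin x * Real.exp (-(x * t)) :=
      integral_integral_swap (integrable_sin_mul_exp_neg_mul R)
    _ = _ := by simp only [← intervalIntegral.integral_of_le hR, integral_sin_mul_exp_neg_mul]

lemma abs_cos_add_mul_sin_le (R t : ℝ) : |Real.cos R + t * Real.sin R| ≤ 1 + t ^ 2 := by
  refine abs_le_of_sq_le_sq ?_ (by positivity)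
  have cauchy_schwarz : (Real.cos R + t * Real.sin R) ^ 2 ≤ 1 + t ^ 2 := by
    nlinarith [sq_nonneg (t * Real.cos R - Real.sin R), Real.sin_sq_add_cos_sq R]
  nlinarith [sq_nonneg t]

lemma abs_sineIntegral_sub_pi_div_two_le {R : ℝ} (hR : 0 < R) :
    |sineIntegral R - Real.pi / 2| ≤ R⁻¹ := by
  set remainder : ℝ → ℝ := fun t =>
    Real.exp (-(R * t)) * (Real.cos R + t * Real.sin R) * (1 + t ^ 2)⁻¹ with hremainder
  have hbound (t : ℝ) : ‖remainder t‖ ≤ Real.exp (-(R * t)) := by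
    have hpos : 0 < 1 + t ^ 2 := by positivity
    rw [hremainder, norm_mul, norm_mul, norm_inv, Real.norm_of_nonneg hpos.le,
      Real.norm_of_nonneg (Real.exp_pos _).le, mul_assoc]
    exact mul_le_of_le_one_right (Real.exp_pos _).le
      (mul_inv_le_one_of_le₀ (abs_cos_add_mul_sin_le R t) hpos.le)
  have hint : IntegrableOn remainder (Set.Ioi 0) :=
    (integrableOn_exp_neg_mul_Ioi hR).mono' (by fun_prop) (.of_forall hbound)
  have hSi : sineIntegral R - Real.pi / 2 = -∫ t in Set.Ioi 0, remainder t := by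
    rw [sineIntegral_eq_integral_Ioi hR.le,
      integral_sub integrable_inv_one_add_sq.integrableOn hint, integral_Ioi_inv_one_add_sq]
    simp
  rw [hSi, abs_neg, ← integral_exp_neg_mul_Ioi hR]
  exact norm_integral_le_of_norm_le (integrableOn_exp_neg_mul_Ioi hR) (.of_forall hbound)

lemma tendsto_sineIntegral_atTop : Tendsto sineIntegral atTop (𝓝 (Real.pi / 2)) := by
  refine tendsto_iff_norm_sub_tendsto_zero.2 <| squeeze_zero' (.of_forall fun _ => norm_nonneg _)
    ?_ tendsto_inv_atTop_zero
  filter_upwards [eventually_gt_atTop 0] with R hR using abs_sineIntegral_sub_pi_div_two_le hR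

lemma tendsto_sineIntegral_div_of_pos {τ : ℝ} (hτ : 0 < τ) :
    Tendsto (fun ε => sineIntegral (τ / ε)) (𝓝[>] 0) (𝓝 (Real.pi / 2)) :=
  tendsto_sineIntegral_atTop.comp <|
    (tendsto_inv_nhdsGT_zero.const_mul_atTop hτ).congr fun ε => (div_eq_mul_inv τ ε).symm

lemma tendsto_sineIntegral_div (τ : ℝ) :
    Tendsto (fun ε => sineIntegral (τ / ε)) (𝓝[>] 0) (𝓝 (Real.sign τ * (Real.pi / 2))) := by
  rcases lt_trichotomy τ 0 with hτ | rfl | hτ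
  · simpa [Real.sign_of_neg hτ, neg_div, sineIntegral_neg] using
      (tendsto_sineIntegral_div_of_pos (neg_pos.2 hτ)).neg
  · simp
  · simpa [Real.sign_of_pos hτ] using tendsto_sineIntegral_div_of_pos hτ

lemma integral_sin_div_div {a b : ℝ} (hab : (0 : ℝ) ∉ Set.uIcc a b) (τ : ℝ) :
    ∫ p in a..b, Real.sin (τ / p) / p = sineIntegral (τ / a) - sineIntegral (τ / b) := by
  have hne {p : ℝ} (hp : p ∈ Set.uIcc a b) : p ≠ 0 := ne_of_mem_of_not_mem hp hab
  have hderiv : ∀ p ∈ Set.uIcc a b,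
      HasDerivAt (fun p => -sineIntegral (τ / p)) (Real.sin (τ / p) / p) p := by
    intro p hp
    have hp₀ := hne hp
    have hdiv : HasDerivAt (fun p => τ / p) (τ * -(p ^ 2)⁻¹) p :=
      (hasDerivAt_inv hp₀).const_mul τ
    refine ((hasDerivAt_sineIntegral (τ / p)).comp p hdiv).neg.congr_deriv ?_
    rcases eq_or_ne τ 0 with rfl | hτ
    · simp
    · rw [Real.sinc_of_ne_zero (div_ne_zero hτ hp₀)]
      field_simp
  have hcont : ContinuousOn (fun p => Real.sin (τ / p) / p) (Set.uIcc a b) :=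
    have hdiv : ContinuousOn (fun p => τ / p) (Set.uIcc a b) :=
      continuousOn_const.div continuousOn_id fun _ => hne
    (Real.continuous_sin.comp_continuousOn hdiv).div continuousOn_id fun _ => hne
  rw [intervalIntegral.integral_eq_sub_of_hasDerivAt hderiv hcont.intervalIntegrable]
  ring

end SineIntegral

section PrincipalValue

variable {E : Type*} [NormedAddCommGroup E] [NormedSpace ℝ E] {f g : ℝ → E} {a b : E}

/-- `HasPrincipalValue f a` says that `a` is the Cauchy principal value at `0` of the integral of
`f` over `ℝ`. Integrability away from `0` is required, so that no truncated integral is a junk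
value. -/
structure HasPrincipalValue (f : ℝ → E) (a : E) : Prop where
  integrableOn : ∀ ε > 0, IntegrableOn f {p : ℝ | ε ≤ |p|}
  tendsto : Tendsto (fun ε : ℝ => ∫ p in {p : ℝ | ε ≤ |p|}, f p) (𝓝[>] 0) (𝓝 a)

lemma measurableSet_le_abs (ε : ℝ) : MeasurableSet {p : ℝ | ε ≤ |p|} :=
  measurableSet_le measurable_const measurable_abs

lemma aecover_le_abs : AECover volume (𝓝[>] (0 : ℝ)) fun ε => {p : ℝ | ε ≤ |p|} where
  ae_eventually_mem := by
    filter_upwards [Measure.ae_ne volume 0] with p hp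
    exact nhdsWithin_le_nhds (eventually_le_nhds (abs_pos.2 hp))
  measurableSet := measurableSet_le_abs

lemma hasPrincipalValue_of_integrable (hf : Integrable f) : HasPrincipalValue f (∫ p, f p) :=
  ⟨fun _ _ => hf.integrableOn, aecover_le_abs.integral_tendsto_of_countably_generated hf⟩

lemma HasPrincipalValue.add (hf : HasPrincipalValue f a) (hg : HasPrincipalValue g b) :
    HasPrincipalValue (fun p => f p + g p) (a + b) where
  integrableOn ε hε := (hf.integrableOn ε hε).add (hg.integrableOn ε hε)
  tendsto := by
    refine (hf.tendsto.add hg.tendsto).congr' ?_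
    filter_upwards [self_mem_nhdsWithin] with ε hε
    exact (integral_add (hf.integrableOn ε hε) (hg.integrableOn ε hε)).symm

lemma HasPrincipalValue.smul_const {𝕜 : Type*} [RCLike 𝕜] [NormedSpace 𝕜 E] [CompleteSpace E]
    {k : ℝ → 𝕜} {c : 𝕜} (hk : HasPrincipalValue k c) (v : E) :
    HasPrincipalValue (fun p => k p • v) (c • v) where
  integrableOn ε hε := (hk.integrableOn ε hε).smul_const v
  tendsto := by simpa only [integral_smul_const] using hk.tendsto.smul_const v

lemma setIntegral_le_abs {ε : ℝ} (hε : 0 < ε) (hf : IntegrableOn f {p : ℝ | ε ≤ |p|}) :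
    ∫ p in {p : ℝ | ε ≤ |p|}, f p = ∫ p in Set.Ioi ε, (f p + f (-p)) := by
  have hsplit : {p : ℝ | ε ≤ |p|} = Set.Ici ε ∪ Set.Iic (-ε) := by
    ext p
    simp [le_abs, le_neg]
  rw [hsplit] at hf ⊢
  have hneg : IntegrableOn (fun p => f (-p)) (Set.Ioi ε) :=
    (integrableOn_Ici_iff_integrableOn_Ioi (b := ε)).1
      (by simpa using hf.right_of_union.comp_neg)
  rw [setIntegral_union (Set.Iic_disjoint_Ici.2 (by linarith)).symm measurableSet_Iic
    hf.left_of_union hf.right_of_union, integral_Ici_eq_integral_Ioi, ← integral_comp_neg_Ioi,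
    integral_add (hf.left_of_union.mono_set Set.Ioi_subset_Ici_self) hneg]

end PrincipalValue

section OscillatoryKernel

lemma norm_cexp_I_mul_div (τ p : ℝ) : ‖Complex.exp (Complex.I * τ / p)‖ = 1 := by
  simpa [mul_div_assoc] using Complex.norm_exp_I_mul_ofReal (τ / p)

lemma cexp_I_mul_div_add_neg (τ p : ℝ) :
    Complex.exp (Complex.I * τ / p) / p + Complex.exp (Complex.I * τ / (-p : ℝ)) / (-p : ℝ) =
      2 * Complex.I * (Real.sin (τ / p) / p : ℝ) := by
  have hpos : Complex.I * τ / p = τ / p * Complex.I := by ring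
  have hneg : Complex.I * τ / (-p : ℝ) = -(τ / p) * Complex.I := by push_cast; ring
  rw [hpos, hneg, Complex.exp_mul_I, Complex.exp_mul_I, Complex.cos_neg, Complex.sin_neg]
  push_cast
  ring

/-- The kernel `exp (iτ/p) / p` cut off to `[-1, 1]`, which carries the whole singularity at
`p = 0`. -/
noncomputable def truncatedKernel (τ : ℝ) : ℝ → ℂ :=
  (Set.Icc (-1) 1).indicator fun p => Complex.exp (Complex.I * τ / p) / p

lemma integrableOn_truncatedKernel (τ : ℝ) {ε : ℝ} (hε : 0 < ε) :
    IntegrableOn (truncatedKernel τ) {p : ℝ | ε ≤ |p|} := by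
  rw [truncatedKernel, IntegrableOn, integrable_indicator_iff measurableSet_Icc, IntegrableOn,
    Measure.restrict_restrict measurableSet_Icc]
  have hmeas : MeasurableSet (Set.Icc (-1) 1 ∩ {p : ℝ | ε ≤ |p|}) :=
    measurableSet_Icc.inter (measurableSet_le_abs ε)
  refine Measure.integrableOn_of_bounded (M := ε⁻¹)
    (measure_ne_top_of_subset Set.inter_subset_left isCompact_Icc.measure_ne_top)
    (Measurable.aestronglyMeasurable (by fun_prop)) ?_
  filter_upwards [ae_restrict_mem hmeas] with p hp
  rw [norm_div, norm_cexp_I_mul_div, Complex.norm_real, one_div]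
  exact inv_anti₀ hε hp.2

lemma setIntegral_truncatedKernel (τ : ℝ) {ε : ℝ} (hε : 0 < ε) (hε₁ : ε ≤ 1) :
    ∫ p in {p : ℝ | ε ≤ |p|}, truncatedKernel τ p =
      2 * Complex.I * (sineIntegral (τ / ε) - sineIntegral τ : ℝ) := by
  have hfold : ∀ p ∈ Set.Ioi ε, truncatedKernel τ p + truncatedKernel τ (-p) =
      (Set.Iic 1).indicator (fun p => 2 * Complex.I * (Real.sin (τ / p) / p : ℝ)) p := by
    intro p hp
    have hp₀ : 0 < p := hε.trans hp
    by_cases hp₁ : p ≤ 1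
    · have hmem : p ∈ Set.Icc (-1) 1 ∧ -p ∈ Set.Icc (-1) 1 := by
        simp only [Set.mem_Icc]
        grind
      simp only [truncatedKernel, Set.indicator_of_mem hmem.1, Set.indicator_of_mem hmem.2,
        Set.indicator_of_mem (Set.mem_Iic.2 hp₁), cexp_I_mul_div_add_neg]
    · have hnotMem : p ∉ Set.Icc (-1) 1 ∧ -p ∉ Set.Icc (-1) 1 := by
        simp only [Set.mem_Icc]
        grind
      simp only [truncatedKernel, Set.indicator_of_notMem hnotMem.1,
        Set.indicator_of_notMem hnotMem.2, Set.indicator_of_notMem (Set.mem_Iic.not.2 hp₁),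
        add_zero]
  rw [setIntegral_le_abs hε (integrableOn_truncatedKernel τ hε),
    setIntegral_congr_fun measurableSet_Ioi hfold, setIntegral_indicator measurableSet_Iic,
    Set.Ioi_inter_Iic, integral_const_mul, integral_complex_ofReal,
    ← intervalIntegral.integral_of_le hε₁,
    integral_sin_div_div (Set.notMem_uIcc_of_lt hε one_pos), div_one]

lemma hasPrincipalValue_truncatedKernel (τ : ℝ) :
    HasPrincipalValue (truncatedKernel τ)
      (2 * Complex.I * (Real.sign τ * (Real.pi / 2) - sineIntegral τ : ℝ)) where
  integrableOn _ hε := integrableOn_truncatedKernel τ hε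
  tendsto := by
    refine (((tendsto_sineIntegral_div τ).sub_const (sineIntegral τ)).ofReal.const_mul
      (2 * Complex.I)).congr' ?_
    filter_upwards [Ioc_mem_nhdsGT one_pos] with ε hε
    exact (setIntegral_truncatedKernel τ hε.1 hε.2).symm

end OscillatoryKernel

section OscillatoryPairing

variable {E : Type*} [NormedAddCommGroup E] [NormedSpace ℂ E] {φ : ℝ → E}

/-- The quotient `φ p / p` with its singular part `φ 0 / p` on `[-1, 1]` subtracted. Its
integrability is the Dini condition at `0` together with integrability of `φ p / p` away
from `0`. -/
noncomputable def subtractedQuotient (φ : ℝ → E) (p : ℝ) : E :=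
  (p : ℂ)⁻¹ • (φ p - (Set.Icc (-1) 1).indicator (fun _ => φ 0) p)

lemma integrable_subtractedQuotient (hφ : Integrable φ)
    (hφ₀ : (fun p => φ p - φ 0) =O[𝓝 0] fun p : ℝ => p) : Integrable (subtractedQuotient φ) := by
  obtain ⟨C, hC⟩ := hφ₀.bound
  have hIcc : Set.Icc (-1) 1 ∈ 𝓝 (0 : ℝ) := Icc_mem_nhds (by simp) (by simp)
  obtain ⟨δ, hδ, hball⟩ := Metric.eventually_nhds_iff_ball.1 (hC.and hIcc)
  have hnum : Integrable fun p => φ p - (Set.Icc (-1) 1).indicator (fun _ => φ 0) p :=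
    hφ.sub ((integrable_indicator_iff measurableSet_Icc).2 (integrableOn_const (by simp)))
  have hmeas : AEStronglyMeasurable (subtractedQuotient φ) :=
    AEStronglyMeasurable.smul (by fun_prop) hnum.aestronglyMeasurable
  have hnear : IntegrableOn (subtractedQuotient φ) (Metric.ball 0 δ) := by
    refine Measure.integrableOn_of_bounded (M := C) measure_ball_lt_top.ne hmeas ?_
    filter_upwards [ae_restrict_mem measurableSet_ball,
      ae_restrict_of_ae (Measure.ae_ne volume (0 : ℝ))] with p hp hp₀
    obtain ⟨hle, hmem⟩ := hball p hp
    rw [subtractedQuotient, Set.indicator_of_mem (Set.mem_Icc.2 hmem), norm_smul, norm_inv,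
      Complex.norm_real]
    exact (inv_mul_le_iff₀' (norm_pos_iff.2 hp₀)).2 hle
  have hfar : IntegrableOn (subtractedQuotient φ) (Metric.ball 0 δ)ᶜ := by
    refine (hnum.norm.const_mul δ⁻¹).integrableOn.mono' hmeas.restrict ?_
    filter_upwards [ae_restrict_mem measurableSet_ball.compl] with p hp
    rw [subtractedQuotient, norm_smul, norm_inv, Complex.norm_real]
    gcongr
    simpa using hp
  exact integrableOn_univ.1 (by simpa using hnear.union hfar)

lemma integrable_cexp_smul {g : ℝ → E} (hg : Integrable g) (τ : ℝ) :
    Integrable fun p : ℝ => Complex.exp (Complex.I * τ / p) • g p :=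
  hg.bdd_smul 1 (Measurable.aestronglyMeasurable (by fun_prop))
    (.of_forall fun p => (norm_cexp_I_mul_div τ p).le)

lemma continuous_integral_cexp_smul {g : ℝ → E} (hg : Integrable g) :
    Continuous fun τ : ℝ => ∫ p : ℝ, Complex.exp (Complex.I * τ / p) • g p := by
  refine continuous_of_dominated (bound := fun p => ‖g p‖)
    (fun τ => (integrable_cexp_smul hg τ).aestronglyMeasurable)
    (fun τ => .of_forall fun p => ?_) hg.norm (.of_forall fun p => by fun_prop)
  rw [norm_smul, norm_cexp_I_mul_div, one_mul]

/-- The value of the principal-value integral of `exp (iτ/p) / p • φ p`, written as a part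
continuous in `τ` plus the contribution of the truncated kernel, which jumps at `τ = 0`. -/
noncomputable def oscillatoryPairing (φ : ℝ → E) (τ : ℝ) : E :=
  (∫ p : ℝ, Complex.exp (Complex.I * τ / p) • subtractedQuotient φ p) +
    (2 * Complex.I * (Real.sign τ * (Real.pi / 2) - sineIntegral τ : ℝ)) • φ 0

lemma cexp_div_smul_eq_add (φ : ℝ → E) (τ p : ℝ) :
    (Complex.exp (Complex.I * τ / p) / p) • φ p =
      Complex.exp (Complex.I * τ / p) • subtractedQuotient φ p + truncatedKernel τ p • φ 0 := by
  by_cases hp : p ∈ Set.Icc (-1 : ℝ) 1 <;>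
    simp [subtractedQuotient, truncatedKernel, hp, smul_sub, smul_smul, div_eq_mul_inv]

lemma hasPrincipalValue_oscillatoryPairing [CompleteSpace E]
    (hφ : Integrable (subtractedQuotient φ)) (τ : ℝ) :
    HasPrincipalValue (fun p : ℝ => (Complex.exp (Complex.I * τ / p) / p) • φ p)
      (oscillatoryPairing φ τ) := by
  simp only [cexp_div_smul_eq_add]
  exact (hasPrincipalValue_of_integrable (integrable_cexp_smul hφ τ)).add
    ((hasPrincipalValue_truncatedKernel τ).smul_const (φ 0))

lemma tendsto_oscillatoryPairing (hφ : Integrable (subtractedQuotient φ)) {l : Filter ℝ} {σ : ℝ}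
    (hl : l ≤ 𝓝 0) (hσ : Tendsto Real.sign l (𝓝 σ)) :
    Tendsto (oscillatoryPairing φ) l
      (𝓝 (oscillatoryPairing φ 0 + (σ * Real.pi * Complex.I) • φ 0)) := by
  have hregular := ((continuous_integral_cexp_smul hφ).tendsto 0).mono_left hl
  have hSi := (continuous_sineIntegral.tendsto 0).mono_left hl
  have hsingular :=
    (((hσ.mul_const (Real.pi / 2)).sub hSi).ofReal.const_mul (2 * Complex.I)).smul_const (φ 0)
  have hlimit : oscillatoryPairing φ 0 + (σ * Real.pi * Complex.I) • φ 0 =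
      (∫ p : ℝ, Complex.exp (Complex.I * (0 : ℝ) / p) • subtractedQuotient φ p) +
        (2 * Complex.I * (σ * (Real.pi / 2) - sineIntegral 0 : ℝ)) • φ 0 := by
    simp only [oscillatoryPairing, sineIntegral_zero, Real.sign_zero, zero_mul, sub_zero,
      Complex.ofReal_zero, mul_zero, zero_smul, add_zero]
    push_cast
    ring_nf
  rw [hlimit]
  exact hregular.add hsingular

end OscillatoryPairing

theorem stmt1_general {E : Type*} [NormedAddCommGroup E] [NormedSpace ℂ E] [CompleteSpace E]
    (φ : ℝ → E) (hφ : Integrable (subtractedQuotient φ)) :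
    ∃ (pv : E) (F : ℝ → E),
      HasPrincipalValue (fun p : ℝ => (p : ℂ)⁻¹ • φ p) pv ∧
      (∀ τ : ℝ, HasPrincipalValue
        (fun p : ℝ => (Complex.exp (Complex.I * τ / p) / p) • φ p) (F τ)) ∧
      Tendsto F (𝓝[>] 0) (𝓝 (pv + (Real.pi * Complex.I) • φ 0)) ∧
      Tendsto F (𝓝[<] 0) (𝓝 (pv - (Real.pi * Complex.I) • φ 0)) := by
  have hsign_pos : Tendsto Real.sign (𝓝[>] 0) (𝓝 1) :=
    tendsto_const_nhds.congr' (eventually_mem_nhdsWithin.mono fun _ h => (Real.sign_of_pos h).symm)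
  have hsign_neg : Tendsto Real.sign (𝓝[<] 0) (𝓝 (-1)) :=
    tendsto_const_nhds.congr' (eventually_mem_nhdsWithin.mono fun _ h => (Real.sign_of_neg h).symm)
  refine ⟨oscillatoryPairing φ 0, oscillatoryPairing φ, ?_,
    hasPrincipalValue_oscillatoryPairing hφ, ?_, ?_⟩
  · simpa using hasPrincipalValue_oscillatoryPairing hφ 0
  · simpa using tendsto_oscillatoryPairing hφ nhdsWithin_le_nhds hsign_pos
  · simpa [sub_eq_add_neg] using tendsto_oscillatoryPairing hφ nhdsWithin_le_nhds hsign_neg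

theorem stmt1 (φ : SchwartzMap ℝ ℂ) :
    ∃ (pv : ℂ) (F : ℝ → ℂ),
      Tendsto (fun ε : ℝ => ∫ p in {p : ℝ | ε ≤ |p|}, φ p / p)
        (𝓝[>] (0 : ℝ)) (𝓝 pv) ∧
      (∀ τ : ℝ, τ ≠ 0 →
        Tendsto (fun ε : ℝ =>
            ∫ p in {p : ℝ | ε ≤ |p|}, Complex.exp (Complex.I * τ / p) * φ p / p)
          (𝓝[>] (0 : ℝ)) (𝓝 (F τ))) ∧
      Tendsto F (𝓝[>] (0 : ℝ)) (𝓝 (pv + Real.pi * Complex.I * φ 0)) ∧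
      Tendsto F (𝓝[<] (0 : ℝ)) (𝓝 (pv - Real.pi * Complex.I * φ 0)) := by
  have hφ : Integrable (subtractedQuotient φ) :=
    integrable_subtractedQuotient φ.integrable
      (by simpa using φ.differentiableAt.isBigO_sub (x₀ := 0))
  obtain ⟨pv, F, hpv, hF, hpos, hneg⟩ := stmt1_general φ hφ
  simp only [smul_eq_mul, inv_mul_eq_div, div_mul_eq_mul_div] at hpv hF hpos hneg
  exact ⟨pv, F, hpv.tendsto, fun τ _ => (hF τ).tendsto, hpos, hneg⟩
end

section
/- For every Schwartz function V : ℝ² → ℂ, the function U(t,x,y) = ∫∫_{ℝ²} exp(−i p₁ x + i p₂ y − i t (p₁⁴ + 3p₂²)/p₁) V(p₁,p₂) dp₁ dp₂ (the integrand extended by the full phase factor interpreted as a bounded measurable function, defined for p₁ ≠ 0) satisfies: for every t ∈ ℝ, ∫_{ℝ} (∫_{ℝ} U(t,x,y) dy) dx = (2π)² V(0,0). In particular the iterated integral ∫dx ∫dy U(t,x,y) is a conserved quantity in t. -/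
open MeasureTheory Filter Topology

/-!
Integrating first in `y` inverts the Fourier transform in the second frequency `q`, which restricts
the amplitude to `q = 0`, where the singular phase `3 t q² / p` vanishes; integrating in `x`
then restricts it to `p = 0`.

The exchange of integrals in the first step needs the Fourier transform in `q` of the chirped slice
`exp (-3 i t q² / p) V (p, q)` to be integrable jointly in `p` and its dual variable. By Plancherel
and Carlson's inequality, `‖𝓕 f‖₁² ≤ ‖f‖₂ ‖f'‖₂`, so a chirp of rate `a` costs only `√(1 + |a|)`;
at `a = -3 t / p` this is the integrable singularity `|p| ^ (-1 / 2)`. The decay obtained by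
integrating by parts twice would cost `1 / |p|`, which is not integrable.
-/

open Complex (I)
open scoped SchwartzMap FourierTransform LineDeriv Real

section PhaseMul

variable {E F : Type*} [NormedAddCommGroup E] [NormedSpace ℝ E]
  [NormedAddCommGroup F] [NormedSpace ℂ F]

lemma iteratedDeriv_cexp_ofReal_mul_I (n : ℕ) :
    iteratedDeriv n (fun x : ℝ ↦ Complex.exp (x * I)) =
      fun x : ℝ ↦ I ^ n * Complex.exp (x * I) := by
  induction n with
  | zero => simp only [iteratedDeriv_zero, pow_zero, one_mul]
  | succ n ih =>
    rw [iteratedDeriv_succ, ih]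
    ext x
    have h : HasDerivAt (fun x : ℝ ↦ (x : ℂ) * I) (1 * I) x :=
      (Complex.ofRealCLM.hasDerivAt (x := x)).mul_const I
    rw [(h.cexp.const_mul (I ^ n)).deriv]
    ring

lemma hasTemperateGrowth_cexp_ofReal_mul_I :
    (fun x : ℝ ↦ Complex.exp (x * I)).HasTemperateGrowth := by
  refine ⟨(Complex.ofRealCLM.contDiff.mul contDiff_const).cexp, fun n ↦ ⟨0, 1, fun x ↦ ?_⟩⟩
  rw [norm_iteratedFDeriv_eq_norm_iteratedDeriv, iteratedDeriv_cexp_ofReal_mul_I]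
  simp

/-- Multiplication of a Schwartz function by the unimodular factor `exp (i φ)`, the form taken by
all the propagators below. As for `SchwartzMap.smulLeftCLM`, the value is `0` when `exp (i φ)` is
not of temperate growth. -/
noncomputable def phaseMul (φ : E → ℝ) : 𝓢(E, F) →L[ℂ] 𝓢(E, F) :=
  SchwartzMap.smulLeftCLM F fun x ↦ Complex.exp (φ x * I)

lemma phaseMul_apply {φ : E → ℝ} (hφ : φ.HasTemperateGrowth) (f : 𝓢(E, F)) (x : E) :
    phaseMul φ f x = Complex.exp (φ x * I) • f x :=
  SchwartzMap.smulLeftCLM_apply_apply (hasTemperateGrowth_cexp_ofReal_mul_I.comp hφ) f x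

lemma norm_phaseMul_apply {φ : E → ℝ} (hφ : φ.HasTemperateGrowth) (f : 𝓢(E, F)) (x : E) :
    ‖phaseMul φ f x‖ = ‖f x‖ := by
  rw [phaseMul_apply hφ, norm_smul, Complex.norm_exp_ofReal_mul_I, one_mul]

lemma norm_deriv_phaseMul_le {φ : ℝ → ℝ} (hφ : φ.HasTemperateGrowth) (f : 𝓢(ℝ, F)) (x : ℝ) :
    ‖deriv (phaseMul φ f) x‖ ≤ |deriv φ x| * ‖f x‖ + ‖deriv f x‖ := by
  have hphase : HasDerivAt (fun x ↦ Complex.exp (φ x * I))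
      (Complex.exp (φ x * I) * (deriv φ x * I)) x :=
    (((hφ.1.differentiable (by simp)) x).hasDerivAt.ofReal_comp.mul_const I).cexp
  have hprod : deriv (phaseMul φ f) x =
      Complex.exp (φ x * I) • deriv f x + (Complex.exp (φ x * I) * (deriv φ x * I)) • f x := by
    rw [funext (phaseMul_apply hφ f)]
    exact (hphase.smul f.differentiableAt.hasDerivAt).deriv
  rw [hprod, add_comm]
  refine (norm_add_le _ _).trans_eq ?_
  simp [norm_smul]

end PhaseMul

section Slices

variable {D E F : Type*} [NormedAddCommGroup D] [NormedSpace ℝ D]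
  [NormedAddCommGroup E] [NormedSpace ℝ E] [NormedAddCommGroup F] [NormedSpace ℝ F]

/-- The restriction `q ↦ f (p, q)` of a Schwartz function of two variables to a vertical slice. -/
noncomputable def sliceRight (f : 𝓢(D × E, F)) (p : D) : 𝓢(E, F) :=
  SchwartzMap.compCLMOfAntilipschitz ℝ (g := fun q ↦ (p, q)) (K := 1)
    (by
      have h : (fun q : E ↦ (p, q)) = fun q ↦ (p, 0) + ContinuousLinearMap.inr ℝ D E q := by
        ext q <;> simp
      rw [h]
      fun_prop)
    (Isometry.antilipschitz (Isometry.of_dist_eq fun _ _ ↦ by simp [Prod.dist_eq])) f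

lemma sliceRight_apply (f : 𝓢(D × E, F)) (p : D) (q : E) : sliceRight f p q = f (p, q) := rfl

/-- The restriction `p ↦ f (p, q)` of a Schwartz function of two variables to a horizontal
slice. -/
noncomputable def sliceLeft (f : 𝓢(D × E, F)) (q : E) : 𝓢(D, F) :=
  sliceRight (SchwartzMap.compCLMOfContinuousLinearEquiv ℝ
    (ContinuousLinearEquiv.prodComm ℝ E D) f) q

lemma sliceLeft_apply (f : 𝓢(D × E, F)) (q : E) (p : D) : sliceLeft f q p = f (p, q) := rfl

lemma deriv_sliceRight (f : 𝓢(D × ℝ, F)) (p : D) (q : ℝ) :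
    deriv (sliceRight f p) q = ∂_{((0, 1) : D × ℝ)} f (p, q) := by
  rw [SchwartzMap.lineDerivOp_apply_eq_fderiv]
  exact ((f.hasFDerivAt (p, q)).comp_hasDerivAt q
    ((hasDerivAt_const q p).prodMk (hasDerivAt_id q))).deriv

lemma exists_forall_one_add_sq_pow_mul_norm_le (f : 𝓢(D × E, F)) (k l : ℕ) :
    ∃ C, ∀ p q, (1 + ‖p‖ ^ 2) ^ k * (1 + ‖q‖ ^ 2) ^ l * ‖f (p, q)‖ ≤ C := by
  refine ⟨_, fun p q ↦ le_trans ?_ (SchwartzMap.one_add_le_sup_seminorm_apply (𝕜 := ℝ)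
    (m := (2 * k + 2 * l, 0)) le_rfl le_rfl f (p, q))⟩
  rw [norm_iteratedFDeriv_zero, pow_add, pow_mul, pow_mul]
  have weight_le {a : ℝ} (ha₀ : 0 ≤ a) (ha : a ≤ ‖(p, q)‖) : 1 + a ^ 2 ≤ (1 + ‖(p, q)‖) ^ 2 := by
    nlinarith
  gcongr
  · exact weight_le (norm_nonneg p) (norm_fst_le (p, q))
  · exact weight_le (norm_nonneg q) (norm_snd_le (p, q))

end Slices

section Carlson

lemma integral_norm_sq_pos {F : Type*} [NormedAddCommGroup F] {f : ℝ → F}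
    (hf : MemLp f 2) (hf₀ : ¬ f =ᵐ[volume] 0) :
    0 < ∫ x, ‖f x‖ ^ 2 := by
  refine (integral_nonneg fun x ↦ sq_nonneg ‖f x‖).lt_of_ne' fun h ↦ hf₀ ?_
  filter_upwards [(integral_eq_zero_iff_of_nonneg (fun x ↦ sq_nonneg ‖f x‖)
    ((memLp_two_iff_integrable_sq_norm hf.1).1 hf)).1 h] with x hx
  simpa using hx

variable {F : Type*} [NormedAddCommGroup F] [NormedSpace ℝ F] {f : ℝ → F}

lemma integral_inv_one_add_mul_sq {s : ℝ} (hs : 0 < s) :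
    ∫ x : ℝ, (1 + (s * x) ^ 2)⁻¹ = π / s := by
  rw [Measure.integral_comp_mul_left (fun x : ℝ ↦ (1 + x ^ 2)⁻¹) s, integral_univ_inv_one_add_sq,
    abs_of_pos (by positivity), smul_eq_mul]
  ring

lemma integrable_and_two_mul_integral_norm_le (hf : MemLp f 2) (hxf : MemLp (fun x ↦ x • f x) 2)
    {k s : ℝ} (hk : 0 < k) (hs : 0 < s) :
    Integrable f ∧ 2 * ∫ x, ‖f x‖ ≤
      k * ((∫ x, ‖f x‖ ^ 2) + s ^ 2 * ∫ x, ‖x • f x‖ ^ 2) + π / (k * s) := by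
  have hf₂ := (memLp_two_iff_integrable_sq_norm hf.1).1 hf
  have hxf₂ := (memLp_two_iff_integrable_sq_norm hxf.1).1 hxf
  have hweighted : Integrable fun x ↦ k * (‖f x‖ ^ 2 + s ^ 2 * ‖x • f x‖ ^ 2) :=
    (hf₂.add (hxf₂.const_mul _)).const_mul _
  have hweight : Integrable fun x : ℝ ↦ k⁻¹ * (1 + (s * x) ^ 2)⁻¹ :=
    (integrable_inv_one_add_sq.comp_mul_left' hs.ne').const_mul _
  have pointwise (x : ℝ) : 2 * ‖f x‖ ≤
      k * (‖f x‖ ^ 2 + s ^ 2 * ‖x • f x‖ ^ 2) + k⁻¹ * (1 + (s * x) ^ 2)⁻¹ := by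
    calc 2 * ‖f x‖
      _ ≤ k * (1 + (s * x) ^ 2) * ‖f x‖ ^ 2 + (k * (1 + (s * x) ^ 2))⁻¹ := by
        rw [← sub_nonneg]
        convert (by positivity : 0 ≤ (k * (1 + (s * x) ^ 2))⁻¹ *
          (k * (1 + (s * x) ^ 2) * ‖f x‖ - 1) ^ 2) using 1
        field_simp
        ring
      _ = _ := by
        simp only [norm_smul, Real.norm_eq_abs, mul_pow, sq_abs, mul_inv]
        ring
  refine ⟨(hweighted.add hweight).mono' hf.1 (.of_forall fun x ↦ ?_), ?_⟩
  · exact (le_mul_of_one_le_left (norm_nonneg _) one_le_two).trans (pointwise x)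
  · calc 2 * ∫ x, ‖f x‖
      _ = ∫ x, 2 * ‖f x‖ := (integral_const_mul _ _).symm
      _ ≤ ∫ x, (k * (‖f x‖ ^ 2 + s ^ 2 * ‖x • f x‖ ^ 2) + k⁻¹ * (1 + (s * x) ^ 2)⁻¹) :=
        integral_mono_of_nonneg (.of_forall fun x ↦ by positivity) (hweighted.add hweight)
          (.of_forall pointwise)
      _ = _ := by
        rw [integral_add hweighted hweight, integral_const_mul,
          integral_add hf₂ (hxf₂.const_mul _), integral_const_mul, integral_const_mul,
          integral_inv_one_add_mul_sq hs]
        field_simp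

theorem carlson_inequality (hf : MemLp f 2) (hxf : MemLp (fun x ↦ x • f x) 2) :
    Integrable f ∧
      (∫ x, ‖f x‖) ^ 2 ≤ 2 * π * (√(∫ x, ‖f x‖ ^ 2) * √(∫ x, ‖x • f x‖ ^ 2)) := by
  refine ⟨(integrable_and_two_mul_integral_norm_le hf hxf one_pos one_pos).1, ?_⟩
  by_cases hf₀ : f =ᵐ[volume] 0
  · rw [integral_eq_zero_of_ae (hf₀.mono fun x hx ↦ by simp [hx]), zero_pow two_ne_zero]
    positivity
  have hxf₀ : ¬ (fun x ↦ x • f x) =ᵐ[volume] 0 := fun h ↦ hf₀ <| by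
    filter_upwards [h, Measure.ae_ne volume 0] with x hx hx₀
    exact (smul_eq_zero.1 hx).resolve_left hx₀
  have hA := Real.sqrt_pos.2 (integral_norm_sq_pos hf hf₀)
  have hB := Real.sqrt_pos.2 (integral_norm_sq_pos hxf hxf₀)
  set α := √(∫ x, ‖f x‖ ^ 2) with hα
  set β := √(∫ x, ‖x • f x‖ ^ 2) with hβ
  set m := √(π * α * β / 2)
  have hm_pos : 0 < m := by positivity
  have hm_sq : m ^ 2 = π * α * β / 2 := Real.sq_sqrt (by positivity)
  -- These `k` and `s` minimise the right-hand side of the weighted bound.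
  have bound := (integrable_and_two_mul_integral_norm_le hf hxf
    (k := m / α ^ 2) (s := α / β) (by positivity) (by positivity)).2
  rw [← Real.sq_sqrt (integral_nonneg fun x ↦ sq_nonneg _ : 0 ≤ ∫ x, ‖f x‖ ^ 2), ← hα,
    ← Real.sq_sqrt (integral_nonneg fun x ↦ sq_nonneg _ : 0 ≤ ∫ x, ‖x • f x‖ ^ 2), ← hβ] at bound
  have optimum : m / α ^ 2 * (α ^ 2 + (α / β) ^ 2 * β ^ 2) + π / (m / α ^ 2 * (α / β)) =
      2 * (2 * m) := by
    field_simp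
    linear_combination (-2) * hm_sq
  calc (∫ x, ‖f x‖) ^ 2
    _ ≤ (2 * m) ^ 2 := by
      gcongr
      linarith
    _ = 2 * π * (α * β) := by rw [mul_pow, hm_sq]; ring

end Carlson

section Fourier

variable {F : Type*} [NormedAddCommGroup F]

theorem sq_integral_norm_fourier_le [InnerProductSpace ℂ F] [CompleteSpace F] (f : 𝓢(ℝ, F)) :
    (∫ ξ, ‖𝓕 f ξ‖) ^ 2 ≤ √(∫ x, ‖f x‖ ^ 2) * √(∫ x, ‖deriv f x‖ ^ 2) := by
  have hderiv (ξ : ℝ) : 𝓕 (SchwartzMap.derivCLM ℂ F f) ξ = (2 * π * I) • ξ • 𝓕 f ξ := by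
    rw [SchwartzMap.fourier_coe, SchwartzMap.fourier_coe]
    refine (congrFun (Real.fourier_deriv f.integrable f.differentiable
      (SchwartzMap.derivCLM ℂ F f).integrable) ξ).trans ?_
    rw [mul_smul, Complex.coe_smul]
  have hmoment : (fun ξ : ℝ ↦ ξ • 𝓕 f ξ) =
      fun ξ ↦ (2 * π * I : ℂ)⁻¹ • 𝓕 (SchwartzMap.derivCLM ℂ F f) ξ := by
    ext ξ
    rw [hderiv, inv_smul_smul₀ Complex.two_pi_I_ne_zero]
  have hmemLp : MemLp (fun ξ : ℝ ↦ ξ • 𝓕 f ξ) 2 := by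
    rw [hmoment]
    exact ((𝓕 (SchwartzMap.derivCLM ℂ F f)).memLp 2).const_smul _
  have hnorm : √(∫ ξ : ℝ, ‖ξ • 𝓕 f ξ‖ ^ 2) = (2 * π)⁻¹ * √(∫ x, ‖deriv f x‖ ^ 2) := by
    have hplancherel := SchwartzMap.integral_norm_sq_fourier (SchwartzMap.derivCLM ℂ F f)
    simp only [SchwartzMap.derivCLM_apply] at hplancherel
    rw [← hplancherel, ← Real.sqrt_sq (by positivity : 0 ≤ (2 * π)⁻¹),
      ← Real.sqrt_mul (by positivity), ← integral_const_mul]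
    simp [congrFun hmoment, norm_smul, mul_pow, abs_of_pos Real.pi_pos]
  have hcarlson := (carlson_inequality ((𝓕 f).memLp 2) hmemLp).2
  rw [hnorm, SchwartzMap.integral_norm_sq_fourier] at hcarlson
  exact hcarlson.trans_eq (by field_simp)

lemma integral_fourier {E : Type*} [NormedAddCommGroup E] [InnerProductSpace ℝ E]
    [FiniteDimensional ℝ E] [MeasurableSpace E] [BorelSpace E] [NormedSpace ℂ F] [CompleteSpace F]
    (f : 𝓢(E, F)) : ∫ ξ, 𝓕 f ξ = f 0 := by
  nth_rw 2 [← FourierTransform.fourierInv_fourier_eq (F := 𝓢(E, F)) f]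
  rw [SchwartzMap.fourierInv_coe, Real.fourierInv_eq']
  simp

lemma integral_fourier_comp_div [NormedSpace ℂ F] [CompleteSpace F] (f : 𝓢(ℝ, F)) (c : ℝ) :
    ∫ x, 𝓕 f (x / c) = |c| • f 0 := by
  rw [Measure.integral_comp_div (fun ξ ↦ 𝓕 f ξ), integral_fourier]

end Fourier

section FourierFamily

variable {α E F : Type*} [MeasurableSpace α] {μ : Measure α} [SFinite μ]
  [NormedAddCommGroup E] [InnerProductSpace ℝ E] [FiniteDimensional ℝ E] [MeasurableSpace E]
  [BorelSpace E] [NormedAddCommGroup F] [NormedSpace ℂ F] {K : α → 𝓢(E, F)}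

lemma aestronglyMeasurable_fourier_family
    (hK : AEStronglyMeasurable (fun z : α × E ↦ K z.1 z.2) (μ.prod volume)) :
    AEStronglyMeasurable (fun z : α × E ↦ 𝓕 (K z.1) z.2) (μ.prod volume) := by
  have hcomp : AEStronglyMeasurable (fun w : (α × E) × E ↦ K w.1.1 w.2)
      ((μ.prod volume).prod volume) :=
    hK.comp_quasiMeasurePreserving
      (QuasiMeasurePreserving.prodMap Measure.quasiMeasurePreserving_fst (.id (volume : Measure E)))
  have hphase : Continuous fun w : E × E ↦ Complex.exp (↑(-2 * π * inner ℝ w.2 w.1) * I) := by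
    fun_prop
  simp only [SchwartzMap.fourier_coe, Real.fourier_eq']
  exact ((hphase.measurable.comp (f := fun w : (α × E) × E ↦ (w.1.2, w.2))
    (by fun_prop)).aestronglyMeasurable.smul hcomp).integral_prod_right'

lemma integrable_fourier_family {g : α → ℝ}
    (hK : AEStronglyMeasurable (fun z : α × E ↦ K z.1 z.2) (μ.prod volume))
    (hg : Integrable g μ) (hle : ∀ᵐ a ∂μ, ∫ ξ, ‖𝓕 (K a) ξ‖ ≤ g a) :
    Integrable (fun z : α × E ↦ 𝓕 (K z.1) z.2) (μ.prod volume) := by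
  have hmeas := aestronglyMeasurable_fourier_family hK
  refine (integrable_prod_iff hmeas).2 ⟨.of_forall fun a ↦ (𝓕 (K a)).integrable, ?_⟩
  refine hg.mono' hmeas.norm.integral_prod_right' (hle.mono fun a ha ↦ ?_)
  rw [Real.norm_of_nonneg (integral_nonneg fun _ ↦ norm_nonneg _)]
  exact ha

lemma integral_integral_fourier_comp_div [CompleteSpace F] {K : α → 𝓢(ℝ, F)}
    (hK : Integrable (fun z : α × ℝ ↦ 𝓕 (K z.1) z.2) (μ.prod volume)) {c : ℝ} (hc : c ≠ 0) :
    Integrable (fun y ↦ ∫ a, 𝓕 (K a) (y / c) ∂μ) ∧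
      ∫ y, ∫ a, 𝓕 (K a) (y / c) ∂μ = |c| • ∫ a, K a 0 ∂μ := by
  refine ⟨hK.integral_prod_right.comp_div hc, ?_⟩
  rw [Measure.integral_comp_div (fun ξ ↦ ∫ a, 𝓕 (K a) ξ ∂μ), ← integral_integral_swap hK]
  simp only [integral_fourier]

lemma integral_cexp_smul_eq_integral_fourier {K : α → 𝓢(ℝ, F)}
    (hK : Integrable (fun z : α × ℝ ↦ K z.1 z.2) (μ.prod volume)) (y : ℝ) :
    ∫ z, Complex.exp (↑(z.2 * y) * I) • K z.1 z.2 ∂μ.prod volume =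
      ∫ a, 𝓕 (K a) (y / -(2 * π)) ∂μ := by
  have hphase : Continuous fun q : ℝ ↦ Complex.exp (↑(q * y) * I) := by fun_prop
  rw [integral_prod]
  · congr! 4 with a
    rw [SchwartzMap.fourier_coe, Real.fourier_eq']
    congr! 6 with q
    rw [RCLike.inner_apply, conj_trivial]
    field_simp
  · refine hK.mono ((hphase.measurable.comp measurable_snd).aestronglyMeasurable.smul hK.1)
      (.of_forall fun z ↦ ?_)
    rw [norm_smul, Complex.norm_exp_ofReal_mul_I, one_mul]

end FourierFamily

section Weight

lemma integrable_comp_abs {E : Type*} [NormedAddCommGroup E] {f : ℝ → E}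
    (hf : IntegrableOn f (Set.Ioi 0)) : Integrable fun x ↦ f |x| := by
  have hpos : IntegrableOn (fun x ↦ f |x|) (Set.Ioi 0) :=
    hf.congr_fun (fun x hx ↦ by rw [abs_of_pos hx]) measurableSet_Ioi
  rw [← integrableOn_univ, ← Set.Iic_union_Ioi (a := (0 : ℝ))]
  refine IntegrableOn.union ?_ hpos
  have hneg : MeasurableEmbedding fun x : ℝ ↦ -x := (Homeomorph.neg ℝ).measurableEmbedding
  rw [← Measure.map_neg_eq_self (volume : Measure ℝ), hneg.integrableOn_map_iff]
  simpa [Function.comp_def] using (integrableOn_Ici_iff_integrableOn_Ioi).2 hpos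

lemma integrable_abs_rpow_div_one_add_sq {s : ℝ} (hs : -1 < s) (hs' : s < 1) :
    Integrable fun x : ℝ ↦ |x| ^ s / (1 + x ^ 2) := by
  have hcont : Continuous fun x : ℝ ↦ (1 + x ^ 2)⁻¹ :=
    (by fun_prop : Continuous fun x : ℝ ↦ 1 + x ^ 2).inv₀ fun x ↦ by positivity
  have htop : (fun x : ℝ ↦ (1 + x ^ 2)⁻¹) =O[atTop] (· ^ (-2 : ℝ)) := by
    refine .of_bound 1 ((eventually_gt_atTop 0).mono fun x hx ↦ ?_)
    rw [Real.rpow_neg hx.le, Real.rpow_two, norm_inv, norm_inv, one_mul,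
      Real.norm_of_nonneg (by positivity), Real.norm_of_nonneg (by positivity)]
    gcongr
    linarith
  have hbot : (fun x : ℝ ↦ (1 + x ^ 2)⁻¹) =O[𝓝[>] 0] (· ^ (-0 : ℝ)) := by
    simpa using (hcont.tendsto 0).isBigO_one ℝ |>.mono nhdsWithin_le_nhds
  have hmellin := mellin_convergent_of_isBigO_scalar (s := s + 1)
    (hcont.locallyIntegrable.locallyIntegrableOn _) htop (by linarith) hbot (by linarith)
  simpa [div_eq_mul_inv] using integrable_comp_abs hmellin

lemma integrable_sqrt_one_add_div_abs_div_one_add_sq (c : ℝ) :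
    Integrable fun x : ℝ ↦ √(1 + c / |x|) / (1 + x ^ 2) := by
  have hdom : Integrable fun x : ℝ ↦
      |x| ^ (0 : ℝ) / (1 + x ^ 2) + √c * (|x| ^ (-(1 / 2) : ℝ) / (1 + x ^ 2)) :=
    (integrable_abs_rpow_div_one_add_sq (by norm_num) (by norm_num)).add
      ((integrable_abs_rpow_div_one_add_sq (by norm_num) (by norm_num)).const_mul _)
  refine hdom.mono' (by fun_prop : Measurable _).aestronglyMeasurable (.of_forall fun x ↦ ?_)
  have hsqrt : √(1 + c / |x|) ≤ 1 + √c * |x| ^ (-(1 / 2) : ℝ) := by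
    rw [Real.rpow_neg (abs_nonneg x), ← Real.sqrt_eq_rpow, ← div_eq_mul_inv,
      ← Real.sqrt_div' c (abs_nonneg x), Real.sqrt_le_left (by positivity)]
    have hsq : c / |x| ≤ √(c / |x|) ^ 2 := Real.sqrt_le_iff.1 le_rfl |>.2
    nlinarith [Real.sqrt_nonneg (c / |x|)]
  rw [Real.norm_of_nonneg (by positivity), Real.rpow_zero, mul_div_assoc', ← add_div]
  gcongr

end Weight

section Chirp

variable {F : Type*} [NormedAddCommGroup F]

/-- The quadratic phase `q ↦ a q² + b` of a chirp with rate `a` and offset `b`. -/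
def chirpPhase (a b : ℝ) (q : ℝ) : ℝ := a * q ^ 2 + b

lemma hasTemperateGrowth_chirpPhase (a b : ℝ) : (chirpPhase a b).HasTemperateGrowth := by
  unfold chirpPhase
  fun_prop

lemma deriv_chirpPhase (a b q : ℝ) : deriv (chirpPhase a b) q = 2 * a * q := by
  have h : HasDerivAt (chirpPhase a b) (a * (2 * q)) q :=
    (((hasDerivAt_pow 2 q).const_mul a).add_const b).congr_deriv (by simp)
  rw [h.deriv]
  ring

lemma sqrt_integral_norm_sq_le {g : ℝ → F} {c : ℝ} (hg : ∀ q, (1 + q ^ 2) * ‖g q‖ ≤ c) :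
    √(∫ q, ‖g q‖ ^ 2) ≤ √π * c := by
  have hc : 0 ≤ c := (by positivity : 0 ≤ (1 + (0 : ℝ) ^ 2) * ‖g 0‖).trans (hg 0)
  rw [Real.sqrt_le_left (by positivity), mul_pow, Real.sq_sqrt Real.pi_nonneg,
    ← integral_univ_inv_one_add_sq, ← integral_mul_const]
  refine integral_mono_of_nonneg (.of_forall fun q ↦ sq_nonneg _)
    (integrable_inv_one_add_sq.mul_const _) (.of_forall fun q ↦ ?_)
  change ‖g q‖ ^ 2 ≤ (1 + q ^ 2)⁻¹ * c ^ 2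
  rw [inv_mul_eq_div, le_div_iff₀ (by positivity)]
  calc ‖g q‖ ^ 2 * (1 + q ^ 2)
    _ ≤ ‖g q‖ ^ 2 * (1 + q ^ 2) ^ 2 := by
      gcongr
      exact le_self_pow₀ (by linarith [sq_nonneg q]) two_ne_zero
    _ = ((1 + q ^ 2) * ‖g q‖) ^ 2 := by ring
    _ ≤ c ^ 2 := by gcongr; exact hg q

lemma integral_norm_fourier_chirp_le [InnerProductSpace ℂ F] [CompleteSpace F] {f : 𝓢(ℝ, F)}
    {M : ℝ} (hf : ∀ q, (1 + q ^ 2) ^ 2 * ‖f q‖ ≤ M) (hf' : ∀ q, (1 + q ^ 2) * ‖deriv f q‖ ≤ M)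
    (a b : ℝ) :
    ∫ ξ, ‖𝓕 (phaseMul (chirpPhase a b) f) ξ‖ ≤ √π * M * √(1 + |a|) := by
  have hφ := hasTemperateGrowth_chirpPhase a b
  have hM : 0 ≤ M := (by positivity : 0 ≤ (1 + (0 : ℝ) ^ 2) ^ 2 * ‖f 0‖).trans (hf 0)
  have hvalue (q : ℝ) : (1 + q ^ 2) * ‖phaseMul (chirpPhase a b) f q‖ ≤ M := by
    rw [norm_phaseMul_apply hφ]
    refine le_trans ?_ (hf q)
    gcongr
    exact le_self_pow₀ (by linarith [sq_nonneg q]) two_ne_zero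
  have hslope (q : ℝ) :
      (1 + q ^ 2) * ‖deriv (phaseMul (chirpPhase a b) f) q‖ ≤ M * (1 + |a|) := by
    have htwo : 2 * |q| ≤ 1 + q ^ 2 := by nlinarith [sq_nonneg (|q| - 1), sq_abs q]
    calc (1 + q ^ 2) * ‖deriv (phaseMul (chirpPhase a b) f) q‖
      _ ≤ (1 + q ^ 2) * (|2 * a * q| * ‖f q‖ + ‖deriv f q‖) := by
        rw [← deriv_chirpPhase a b]
        gcongr
        exact norm_deriv_phaseMul_le hφ f q
      _ = |a| * ((1 + q ^ 2) * (2 * |q|) * ‖f q‖) + (1 + q ^ 2) * ‖deriv f q‖ := by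
        rw [abs_mul, abs_mul, abs_two]
        ring
      _ ≤ |a| * ((1 + q ^ 2) * (1 + q ^ 2) * ‖f q‖) + (1 + q ^ 2) * ‖deriv f q‖ := by gcongr
      _ ≤ |a| * M + M := by
        gcongr
        · simpa [sq] using hf q
        · exact hf' q
      _ = M * (1 + |a|) := by ring
  refine le_of_sq_le_sq ?_ (by positivity)
  calc (∫ ξ, ‖𝓕 (phaseMul (chirpPhase a b) f) ξ‖) ^ 2
    _ ≤ √π * M * (√π * (M * (1 + |a|))) :=
      (sq_integral_norm_fourier_le _).trans <| mul_le_mul (sqrt_integral_norm_sq_le hvalue)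
        (sqrt_integral_norm_sq_le hslope) (Real.sqrt_nonneg _) (by positivity)
    _ = (√π * M * √(1 + |a|)) ^ 2 := by
      rw [mul_pow _ √(1 + |a|), Real.sq_sqrt (by positivity)]
      ring

lemma exists_forall_slice_decay [NormedSpace ℝ F] (V : 𝓢(ℝ × ℝ, F)) :
    ∃ C, ∀ p q, (1 + q ^ 2) ^ 2 * ‖sliceRight V p q‖ ≤ C / (1 + p ^ 2) ∧
      (1 + q ^ 2) * ‖deriv (sliceRight V p) q‖ ≤ C / (1 + p ^ 2) := by
  obtain ⟨C₀, hC₀⟩ := exists_forall_one_add_sq_pow_mul_norm_le V 1 2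
  obtain ⟨C₁, hC₁⟩ := exists_forall_one_add_sq_pow_mul_norm_le (∂_{((0, 1) : ℝ × ℝ)} V) 1 1
  refine ⟨max C₀ C₁, fun p q ↦ ⟨?_, ?_⟩⟩
  · rw [le_div_iff₀' (by positivity), sliceRight_apply]
    simpa [mul_assoc] using (hC₀ p q).trans (le_max_left C₀ C₁)
  · rw [le_div_iff₀' (by positivity), deriv_sliceRight]
    simpa [mul_assoc] using (hC₁ p q).trans (le_max_right C₀ C₁)

variable [InnerProductSpace ℂ F]

lemma phaseMul_chirpPhase_sliceRight_apply (V : 𝓢(ℝ × ℝ, F)) (a b p q : ℝ) :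
    phaseMul (chirpPhase a b) (sliceRight V p) q =
      Complex.exp (↑(a * q ^ 2 + b) * I) • V (p, q) := by
  rw [phaseMul_apply (hasTemperateGrowth_chirpPhase a b), sliceRight_apply, chirpPhase]

lemma integrable_chirp_slice (V : 𝓢(ℝ × ℝ, F)) {a b : ℝ → ℝ} (ha : Measurable a)
    (hb : Measurable b) :
    Integrable fun z : ℝ × ℝ ↦ phaseMul (chirpPhase (a z.1) (b z.1)) (sliceRight V z.1) z.2 := by
  simp only [phaseMul_chirpPhase_sliceRight_apply]
  have hphase : Measurable fun z : ℝ × ℝ ↦ Complex.exp (↑(a z.1 * z.2 ^ 2 + b z.1) * I) := by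
    fun_prop
  refine (V.integrable (μ := volume)).mono
    (hphase.aestronglyMeasurable.smul V.continuous.aestronglyMeasurable) (.of_forall fun z ↦ ?_)
  rw [norm_smul, Complex.norm_exp_ofReal_mul_I, one_mul]

theorem integrable_fourier_chirp_slice [CompleteSpace F] (V : 𝓢(ℝ × ℝ, F)) {a b : ℝ → ℝ}
    (ha : Measurable a) (hb : Measurable b)
    (hweight : Integrable fun p ↦ √(1 + |a p|) / (1 + p ^ 2)) :
    Integrable fun z : ℝ × ℝ ↦
      𝓕 (phaseMul (chirpPhase (a z.1) (b z.1)) (sliceRight V z.1)) z.2 := by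
  obtain ⟨C, hC⟩ := exists_forall_slice_decay V
  have hle (p : ℝ) : ∫ ξ, ‖𝓕 (phaseMul (chirpPhase (a p) (b p)) (sliceRight V p)) ξ‖ ≤
      √π * C * (√(1 + |a p|) / (1 + p ^ 2)) :=
    (integral_norm_fourier_chirp_le (fun q ↦ (hC p q).1) (fun q ↦ (hC p q).2) _ _).trans_eq
      (by ring)
  exact integrable_fourier_family
    (K := fun p ↦ phaseMul (chirpPhase (a p) (b p)) (sliceRight V p))
    (integrable_chirp_slice V ha hb).1 (hweight.const_mul (√π * C)) (.of_forall hle)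

end Chirp

section Evolution

variable {F : Type*} [NormedAddCommGroup F] [InnerProductSpace ℂ F]

/-- The time-`t` propagator at frequency `p` and position `x`, applied to the amplitude `V`:
the function `q ↦ exp (-i (p x + t (p⁴ + 3 q²) / p)) V (p, q)`, with `(p⁴ + 3 q²) / p` expanded as
`p³ + (3 / p) q²` so that the slice at `p = 0` is Schwartz too. -/
noncomputable def evolvedSlice (V : 𝓢(ℝ × ℝ, F)) (t x p : ℝ) : 𝓢(ℝ, F) :=
  phaseMul (chirpPhase (-(3 * t) / p) (-(p * x + t * p ^ 3))) (sliceRight V p)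

/-- The amplitude `p ↦ exp (-i t p³) V (p, 0)` that remains on the line `q = 0`, where the
singular part of the dispersion relation vanishes. -/
noncomputable def evolvedTrace (V : 𝓢(ℝ × ℝ, F)) (t : ℝ) : 𝓢(ℝ, F) :=
  phaseMul (fun p ↦ -t * p ^ 3) (sliceLeft V 0)

lemma evolvedTrace_apply (V : 𝓢(ℝ × ℝ, F)) (t p : ℝ) :
    evolvedTrace V t p = Complex.exp (↑(-t * p ^ 3) * I) • V (p, 0) := by
  rw [evolvedTrace, phaseMul_apply (by fun_prop), sliceLeft_apply]

lemma integrable_evolvedSlice (V : 𝓢(ℝ × ℝ, F)) (t x : ℝ) :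
    Integrable fun z : ℝ × ℝ ↦ evolvedSlice V t x z.1 z.2 :=
  integrable_chirp_slice V (a := fun p ↦ -(3 * t) / p) (b := fun p ↦ -(p * x + t * p ^ 3))
    (by fun_prop) (by fun_prop)

lemma integrable_fourier_evolvedSlice [CompleteSpace F] (V : 𝓢(ℝ × ℝ, F)) (t x : ℝ) :
    Integrable fun z : ℝ × ℝ ↦ 𝓕 (evolvedSlice V t x z.1) z.2 := by
  refine integrable_fourier_chirp_slice V (a := fun p ↦ -(3 * t) / p)
    (b := fun p ↦ -(p * x + t * p ^ 3)) (by fun_prop) (by fun_prop) ?_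
  simpa only [abs_div] using integrable_sqrt_one_add_div_abs_div_one_add_sq |-(3 * t)|

lemma cexp_smul_eq_cexp_smul_evolvedSlice (V : 𝓢(ℝ × ℝ, F)) (t x y : ℝ) {p : ℝ × ℝ}
    (hp : p.1 ≠ 0) :
    Complex.exp (-I * p.1 * x + I * p.2 * y - I * t * (p.1 ^ 4 + 3 * p.2 ^ 2) / p.1) • V p =
      Complex.exp (↑(p.2 * y) * I) • evolvedSlice V t x p.1 p.2 := by
  have hp' : (p.1 : ℂ) ≠ 0 := Complex.ofReal_ne_zero.2 hp
  rw [evolvedSlice, phaseMul_chirpPhase_sliceRight_apply, smul_smul, ← Complex.exp_add]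
  congr 2
  push_cast
  field_simp
  ring

lemma integral_cexp_smul_eq_integral_fourier_evolvedSlice (V : 𝓢(ℝ × ℝ, F)) (t x y : ℝ) :
    ∫ p : ℝ × ℝ, Complex.exp (-I * p.1 * x + I * p.2 * y
      - I * t * (p.1 ^ 4 + 3 * p.2 ^ 2) / p.1) • V p =
      ∫ p, 𝓕 (evolvedSlice V t x p) (y / -(2 * π)) := by
  rw [← integral_cexp_smul_eq_integral_fourier (integrable_evolvedSlice V t x)]
  refine integral_congr_ae ?_
  filter_upwards [Measure.quasiMeasurePreserving_fst.ae (Measure.ae_ne (volume : Measure ℝ) 0)]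
    with p hp
  exact cexp_smul_eq_cexp_smul_evolvedSlice V t x y hp

lemma integral_evolvedSlice_zero (V : 𝓢(ℝ × ℝ, F)) (t x : ℝ) :
    ∫ p, evolvedSlice V t x p 0 = 𝓕 (evolvedTrace V t) (x / (2 * π)) := by
  rw [SchwartzMap.fourier_coe, Real.fourier_eq']
  congr! 2 with p
  rw [evolvedSlice, phaseMul_chirpPhase_sliceRight_apply, evolvedTrace_apply, smul_smul,
    ← Complex.exp_add, RCLike.inner_apply, conj_trivial]
  have hx : 2 * π * (x / (2 * π)) = x := mul_div_cancel₀ x Real.two_pi_pos.ne'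
  rw [← add_mul, ← Complex.ofReal_add]
  congr 4
  linear_combination p * hx

end Evolution

theorem stmt11_general {F : Type*} [NormedAddCommGroup F] [InnerProductSpace ℂ F]
    [CompleteSpace F] (V : 𝓢(ℝ × ℝ, F)) (U : ℝ → ℝ → ℝ → F)
    (hU : ∀ t x y : ℝ, U t x y =
      ∫ p : ℝ × ℝ, Complex.exp (-I * p.1 * x + I * p.2 * y
        - I * t * (p.1 ^ 4 + 3 * p.2 ^ 2) / p.1) • V p) (t : ℝ) :
    (∀ x, Integrable fun y ↦ U t x y) ∧ (Integrable fun x ↦ ∫ y, U t x y) ∧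
      ∫ x, ∫ y, U t x y = (2 * π) ^ 2 • V 0 := by
  have hπ : |2 * π| = 2 * π := abs_of_pos Real.two_pi_pos
  have hUt (x : ℝ) : U t x = fun y ↦ ∫ p, 𝓕 (evolvedSlice V t x p) (y / -(2 * π)) :=
    funext fun y ↦ by rw [hU, integral_cexp_smul_eq_integral_fourier_evolvedSlice]
  have hy (x : ℝ) := integral_integral_fourier_comp_div (integrable_fourier_evolvedSlice V t x)
    (neg_ne_zero.2 Real.two_pi_pos.ne')
  simp only [← hUt, integral_evolvedSlice_zero, abs_neg, hπ] at hy
  refine ⟨fun x ↦ (hy x).1, ?_, ?_⟩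
  · simp only [(hy _).2]
    exact ((𝓕 (evolvedTrace V t)).integrable.comp_div Real.two_pi_pos.ne').smul _
  · calc ∫ x, ∫ y, U t x y
      _ = ∫ x, (2 * π) • 𝓕 (evolvedTrace V t) (x / (2 * π)) := by simp only [(hy _).2]
      _ = (2 * π) • (2 * π) • evolvedTrace V t 0 := by
        rw [integral_smul, integral_fourier_comp_div, hπ]
      _ = (2 * π) ^ 2 • V 0 := by
        rw [evolvedTrace_apply, smul_smul, sq]
        simp [Prod.zero_eq_mk]

theorem stmt11 (V : SchwartzMap (ℝ × ℝ) ℂ)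
    (U : ℝ → ℝ → ℝ → ℂ)
    (hU : ∀ t x y : ℝ, U t x y =
      ∫ p : ℝ × ℝ, Complex.exp (-Complex.I * p.1 * x + Complex.I * p.2 * y
        - Complex.I * t * (p.1 ^ 4 + 3 * p.2 ^ 2) / p.1) * V p) :
    ∀ t : ℝ,
      (∀ x : ℝ, Integrable (fun y : ℝ => U t x y)) ∧
      Integrable (fun x : ℝ => ∫ y : ℝ, U t x y) ∧
      (∫ x : ℝ, ∫ y : ℝ, U t x y) = (2 * Real.pi) ^ 2 * V 0 := by
  intro t
  simpa using stmt11_general V U hU t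
end
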